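/- (Theorem 2.2, second part) Let A = (a_{ijk}) ∈ ℝ^{n×n×n} (n ≥ 1) be a piezoelectric-type tensor and λ a C-eigenvalue of A. Then −ρ_min ≤ λ ≤ ρ_min, where ρ_min := min_{S⊆N} ρ_S and ρ_S := max_{i,j∈N} (1/2)( R_j^{Δ_S,(3)}(A) + ( (R_j^{Δ_S,(3)}(A))² + 4 R_i^{(1)}(A) R_j^{Δ̄_S,(3)}(A) )^{1/2} ). -/

import Mathlib

open Finset

/-- `λ` is a C-eigenvalue of the piezoelectric-type tensor `a` with left C-eigenvector `x`
and right C-eigenvector `y`: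
`A y y = λ x`, `x A y = λ y`, `xᵀ x = 1`, `yᵀ y = 1`. -/
def CEig {n : ℕ} (a : Fin n → Fin n → Fin n → ℝ) (lam : ℝ) (x y : Fin n → ℝ) : Prop :=
  (∀ i, ∑ j, ∑ k, a i j k * y j * y k = lam * x i) ∧
  (∀ i, ∑ j, ∑ k, a j k i * x j * y k = lam * y i) ∧
  (∑ i, x i * x i = 1) ∧ (∑ i, y i * y i = 1)

/-- `R_i^{(1)}(A) = ∑_{l,k} |a_{ilk}|`. -/
noncomputable def R1 {n : ℕ} (a : Fin n → Fin n → Fin n → ℝ) (i : Fin n) : ℝ :=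
  ∑ l, ∑ k, |a i l k|

/-- `R_j^{(3)}(A) = ∑_{l,k} |a_{lkj}|`. -/
noncomputable def R3 {n : ℕ} (a : Fin n → Fin n → Fin n → ℝ) (j : Fin n) : ℝ :=
  ∑ l, ∑ k, |a l k j|

/-- `R_j^{Δ_S,(3)}(A) = ∑_{(l,k) : l ∈ S or k ∈ S} |a_{lkj}|`. -/
noncomputable def R3D {n : ℕ} (a : Fin n → Fin n → Fin n → ℝ) (S : Finset (Fin n))
    (j : Fin n) : ℝ :=
  ∑ l, ∑ k, if l ∈ S ∨ k ∈ S then |a l k j| else 0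

/-- `R_j^{Δ̄_S,(3)}(A) = ∑_{(l,k) : l ∉ S and k ∉ S} |a_{lkj}|`. -/
noncomputable def R3Dbar {n : ℕ} (a : Fin n → Fin n → Fin n → ℝ) (S : Finset (Fin n))
    (j : Fin n) : ℝ :=
  ∑ l, ∑ k, if l ∉ S ∧ k ∉ S then |a l k j| else 0

/-- `ρ_S = max_{i,j} (1/2)(R_j^{Δ_S,(3)} + ((R_j^{Δ_S,(3)})² + 4 R_i^{(1)} R_j^{Δ̄_S,(3)})^{1/2})`. -/
noncomputable def rhoS {n : ℕ} (hn : 0 < n) (a : Fin n → Fin n → Fin n → ℝ)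
    (S : Finset (Fin n)) : ℝ :=
  Finset.univ.sup' (Finset.univ_nonempty_iff.mpr ⟨(⟨0, hn⟩, ⟨0, hn⟩)⟩)
    (fun p : Fin n × Fin n =>
      (1 / 2) * (R3D a S p.2 +
        Real.sqrt ((R3D a S p.2) ^ 2 + 4 * R1 a p.1 * R3Dbar a S p.2)))

/-- `ρ_min = min_{S ⊆ N} ρ_S`. -/
noncomputable def rhoMin {n : ℕ} (hn : 0 < n) (a : Fin n → Fin n → Fin n → ℝ) : ℝ :=
  Finset.univ.inf' (Finset.univ_nonempty_iff.mpr ⟨(∅ : Finset (Fin n))⟩) (rhoS hn a)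

/-! Choose `p` and `q` maximising `|x|` and `|y|`. Row `p` of `A y y = λ x` gives
`|λ| |x p| ≤ R1 p`, since all entries of `y` are at most `1` in absolute value. In row `q` of
`x A y = λ y`, bound `|x l|` by `1` on `Δ_S` and by `|x p|` off it, and divide by `|y q|`:
`|λ| ≤ R3D q + R3Dbar q * |x p|`. Multiplying by `|λ|` and inserting the first bound yields
`|λ|² ≤ R3D q * |λ| + R1 p * R3Dbar q`, so `|λ|` is at most the larger root of this quadratic. -/

section OrderedRing

variable {ι κ R : Type*} [Fintype ι] [Fintype κ]
  [CommRing R] [LinearOrder R] [IsStrictOrderedRing R]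

theorem abs_le_one_of_sum_mul_self_le_one {z : ι → R} (hz : ∑ i, z i * z i ≤ 1) (i : ι) :
    |z i| ≤ 1 :=
  abs_le_one_iff_mul_self_le_one.mpr <|
    (single_le_sum (f := fun i => z i * z i) (fun i _ => mul_self_nonneg (z i))
      (mem_univ i)).trans hz

theorem abs_sum_sum_mul_mul_le {m c : ι → κ → R} {u : ι → R} {v : κ → R} {V : R}
    (hu : ∀ j k, |u j| ≤ c j k) (hv : ∀ k, |v k| ≤ V) :
    |∑ j, ∑ k, m j k * u j * v k| ≤ (∑ j, ∑ k, |m j k| * c j k) * V := by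
  have term_le (j : ι) (k : κ) : |m j k * u j * v k| ≤ |m j k| * c j k * V := by
    rw [abs_mul, abs_mul]
    have hc : 0 ≤ c j k := (abs_nonneg _).trans (hu j k)
    gcongr
    exacts [hu j k, hv k]
  calc |∑ j, ∑ k, m j k * u j * v k|
      ≤ ∑ j, |∑ k, m j k * u j * v k| := abs_sum_le_sum_abs _ _
    _ ≤ ∑ j, ∑ k, |m j k * u j * v k| := by gcongr; exact abs_sum_le_sum_abs _ _
    _ ≤ ∑ j, ∑ k, |m j k| * c j k * V := by gcongr; exact term_le _ _
    _ = (∑ j, ∑ k, |m j k| * c j k) * V := by simp only [sum_mul]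

end OrderedRing

theorem le_half_add_sqrt_of_sq_le {t b c : ℝ} (h : t ^ 2 ≤ b * t + c) :
    t ≤ 1 / 2 * (b + √(b ^ 2 + 4 * c)) := by
  have : 2 * t - b ≤ √(b ^ 2 + 4 * c) := Real.le_sqrt_of_sq_le (by linarith)
  linarith

section Tensor

variable {n : ℕ} (a : Fin n → Fin n → Fin n → ℝ) (S : Finset (Fin n))

theorem R3Dbar_nonneg (j : Fin n) : 0 ≤ R3Dbar a S j :=
  sum_nonneg fun l _ => sum_nonneg fun k _ => by positivity

theorem R3D_add_R3Dbar_mul (j : Fin n) (t : ℝ) :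
    R3D a S j + R3Dbar a S j * t =
      ∑ l, ∑ k, |a l k j| * if l ∈ S ∨ k ∈ S then 1 else t := by
  simp only [R3D, R3Dbar, sum_mul, ← sum_add_distrib, ← not_or, ite_not]
  refine sum_congr rfl fun l _ => sum_congr rfl fun k _ => ?_
  split_ifs <;> ring

theorem le_rhoS (hn : 0 < n) (i j : Fin n) :
    1 / 2 * (R3D a S j + √(R3D a S j ^ 2 + 4 * R1 a i * R3Dbar a S j)) ≤ rhoS hn a S :=
  le_sup' (fun p : Fin n × Fin n =>
    1 / 2 * (R3D a S p.2 + √(R3D a S p.2 ^ 2 + 4 * R1 a p.1 * R3Dbar a S p.2))) (mem_univ (i, j))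

end Tensor

namespace CEig

variable {n : ℕ} {a : Fin n → Fin n → Fin n → ℝ} {lam : ℝ} {x y : Fin n → ℝ}

theorem abs_left_le_one (h : CEig a lam x y) (i : Fin n) : |x i| ≤ 1 :=
  abs_le_one_of_sum_mul_self_le_one h.2.2.1.le i

theorem abs_right_le_one (h : CEig a lam x y) (i : Fin n) : |y i| ≤ 1 :=
  abs_le_one_of_sum_mul_self_le_one h.2.2.2.le i

theorem right_ne_zero (h : CEig a lam x y) : y ≠ 0 := by
  rintro rfl
  simpa using h.2.2.2

theorem abs_mul_abs_left_le_R1 (h : CEig a lam x y) (i : Fin n) : |lam| * |x i| ≤ R1 a i := by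
  rw [← abs_mul, ← h.1 i]
  simpa [R1] using abs_sum_sum_mul_mul_le (m := a i) (c := fun _ _ => 1)
    (fun j _ => h.abs_right_le_one j) h.abs_right_le_one

theorem abs_le_R3D_add_R3Dbar_mul (h : CEig a lam x y) (S : Finset (Fin n)) {M : ℝ} {q : Fin n}
    (hM : ∀ l ∉ S, |x l| ≤ M) (hq : ∀ k, |y k| ≤ |y q|) :
    |lam| ≤ R3D a S q + R3Dbar a S q * M := by
  have hyq : 0 < |y q| := by
    obtain ⟨k, hk⟩ := Function.ne_iff.mp h.right_ne_zero
    exact (abs_pos.mpr hk).trans_le (hq k)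
  have hx (l k : Fin n) : |x l| ≤ if l ∈ S ∨ k ∈ S then 1 else M := by
    split_ifs with hS
    · exact h.abs_left_le_one l
    · exact hM l (not_or.mp hS).1
  refine le_of_mul_le_mul_right ?_ hyq
  rw [← abs_mul, ← h.2.1 q, R3D_add_R3Dbar_mul]
  exact abs_sum_sum_mul_mul_le hx hq

theorem abs_le_rhoS (h : CEig a lam x y) (hn : 0 < n) (S : Finset (Fin n)) :
    |lam| ≤ rhoS hn a S := by
  have : Nonempty (Fin n) := ⟨⟨0, hn⟩⟩
  obtain ⟨p, hp⟩ := Finite.exists_max fun i => |x i|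
  obtain ⟨q, hq⟩ := Finite.exists_max fun i => |y i|
  have hquad : |lam| ^ 2 ≤ R3D a S q * |lam| + R1 a p * R3Dbar a S q :=
    calc |lam| ^ 2 = |lam| * |lam| := sq _
      _ ≤ (R3D a S q + R3Dbar a S q * |x p|) * |lam| := by
        gcongr
        exact h.abs_le_R3D_add_R3Dbar_mul S (fun l _ => hp l) hq
      _ = R3D a S q * |lam| + |lam| * |x p| * R3Dbar a S q := by ring
      _ ≤ R3D a S q * |lam| + R1 a p * R3Dbar a S q := by
        gcongr
        exacts [R3Dbar_nonneg a S q, h.abs_mul_abs_left_le_R1 p]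
  refine (le_half_add_sqrt_of_sq_le hquad).trans ?_
  rw [← mul_assoc]
  exact le_rhoS a S hn p q

end CEig

theorem stmt11_general {n : ℕ} (hn : 0 < n) (a : Fin n → Fin n → Fin n → ℝ)
    (lam : ℝ) (x y : Fin n → ℝ) (h : CEig a lam x y) :
    -(rhoMin hn a) ≤ lam ∧ lam ≤ rhoMin hn a :=
  abs_le.mp <| le_inf' _ _ fun S _ => h.abs_le_rhoS hn S

/-- Theorem 2.2 (second part): every C-eigenvalue `λ` satisfies `-ρ_min ≤ λ ≤ ρ_min`. -/
theorem stmt11 {n : ℕ} (hn : 0 < n) (a : Fin n → Fin n → Fin n → ℝ)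
    (hA : ∀ i j k, a i j k = a i k j)
    (lam : ℝ) (x y : Fin n → ℝ) (h : CEig a lam x y) :
    -(rhoMin hn a) ≤ lam ∧ lam ≤ rhoMin hn a :=
  stmt11_general hn a lam x y h
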